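/- arXiv:2009.06473 — 4 statements merged into one kernel-verified Lean document; each statement's English description precedes it below -/
import Mathlib

section
/- Replacing each vertex (u,v) of the Cohn tree with the fraction |u·v|_b / |u·v|_a yields the Calkin–Wilf tree: for every finite binary sequence s, writing co(s) = (u, v) and cw(s) = (x, y), one has |u·v|_b = x and |u·v|_a = y. -/
/-!
The letter counts of `α w` and `β w` depend only on those of `w`: passing to `α w` adds one `b` for
each `a`, and passing to `β w` adds one `a` for each `b`. On the pair `(|w|_b, |w|_a)` these are
`(x, y) ↦ (x + y, y)` and `(x, y) ↦ (x, x + y)`, the two child rules of the Calkin–Wilf tree. As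
counts add over concatenation, the same holds for `w = u·v` at a vertex `(u, v)` of the Cohn tree,
so the counts follow `cw` by induction on the path from the root, where `ab` gives `(1, 1)`.
-/

/-- The substitution replacing every occurrence of the letter `a` (encoded
`false`) by the two-letter word `ab` (encoded `[false, true]`), leaving `b`
unchanged. -/
def alpha : List Bool → List Bool
  | [] => []
  | c :: w => (if c then [true] else [false, true]) ++ alpha w

/-- The substitution replacing every occurrence of the letter `b` (encoded
`true`) by the two-letter word `ab` (encoded `[false, true]`), leaving `a`
unchanged. -/
def beta : List Bool → List Bool
  | [] => []
  | c :: w => (if c then [false, true] else [false]) ++ beta w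

def coStep : (List Bool × List Bool) → Bool → (List Bool × List Bool)
  | (u, v), false => (beta u, beta v)
  | (u, v), true => (alpha u, alpha v)

/-- The Cohn tree: `co [] = (a, b)`, and if `co s = (u,v)` then
`co (s ++ [false]) = (β u, β v)` and `co (s ++ [true]) = (α u, α v)`. -/
def co (s : List Bool) : List Bool × List Bool := s.foldl coStep ([false], [true])

def cwStep : ℕ × ℕ → Bool → ℕ × ℕ
  | (x, y), false => (x, x + y)
  | (x, y), true => (x + y, y)

/-- The Calkin–Wilf tree: `cw [] = (1,1)`, and if `cw s = (x,y)` then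
`cw (s ++ [false]) = (x, x+y)` and `cw (s ++ [true]) = (x+y, y)`. -/
def cw (s : List Bool) : ℕ × ℕ := s.foldl cwStep (1, 1)

lemma count_true_alpha (w : List Bool) :
    (alpha w).count true = w.count true + w.count false := by
  induction w with
  | nil => rfl
  | cons c w ih => cases c <;> simp [alpha, ih, -List.count_true_add_count_false] <;> omega

lemma count_false_alpha (w : List Bool) : (alpha w).count false = w.count false := by
  induction w with
  | nil => rfl
  | cons c w ih => cases c <;> simp [alpha, ih]

lemma count_true_beta (w : List Bool) : (beta w).count true = w.count true := by
  induction w with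
  | nil => rfl
  | cons c w ih => cases c <;> simp [beta, ih]

lemma count_false_beta (w : List Bool) :
    (beta w).count false = w.count true + w.count false := by
  induction w with
  | nil => rfl
  | cons c w ih => cases c <;> simp [beta, ih, -List.count_true_add_count_false] <;> omega

/-- The pair `(|u·v|_b, |u·v|_a)` attached to a vertex `(u, v)`. -/
def letterCounts (p : List Bool × List Bool) : ℕ × ℕ :=
  ((p.1 ++ p.2).count true, (p.1 ++ p.2).count false)

/-- Letter counts intertwine the child rules of the Cohn and Calkin–Wilf trees. -/
lemma letterCounts_coStep (p : List Bool × List Bool) (c : Bool) :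
    letterCounts (coStep p c) = cwStep (letterCounts p) c := by
  obtain ⟨u, v⟩ := p
  cases c <;>
    simp [letterCounts, coStep, cwStep, count_true_alpha, count_false_alpha,
      count_true_beta, count_false_beta, -List.count_true_add_count_false] <;> omega

lemma letterCounts_co (s : List Bool) : letterCounts (co s) = cw s := by
  induction s using List.reverseRecOn with
  | nil => rfl
  | append_singleton s c ih =>
    simp only [co, cw, List.foldl_append, List.foldl_cons, List.foldl_nil] at ih ⊢
    rw [letterCounts_coStep, ih]

/-- Replacing each vertex `(u, v)` of the Cohn tree by `|u·v|_b / |u·v|_a` yields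
the Calkin–Wilf tree (`a` is encoded `false`, `b` is encoded `true`). -/
theorem cohnTree_counts_eq_calkinWilf :
    ∀ s : List Bool, ∀ u v : List Bool, ∀ x y : ℕ,
      co s = (u, v) → cw s = (x, y) →
      (u ++ v).count true = x ∧ (u ++ v).count false = y := by
  intro s u v x y hco hcw
  have h := letterCounts_co s
  rw [hco, hcw] at h
  exact Prod.ext_iff.mp h
end

section
/- If w is a Christoffel word, then the word α(w) obtained from w by replacing every occurrence of the letter a with the two-letter word ab is again a Christoffel word. -/
/-!
The word `alpha (christoffel p q)` is `christoffel p (p + q)`. Put `n = p + q` and `N = p + n`, the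
two lengths. The prefix of length `k` of `christoffel p q` contains `⌊kq/n⌋` letters `b`, so its
image under `alpha` has length `M k = 2k - ⌊kq/n⌋`. Since `kN = 2kn - kq`, one has
`M k * n = k * N + (kq mod n)`: the remainders of the two words agree at corresponding positions,
and in particular `⌊M k * n / N⌋ = k`. A letter `b` of the first word at position `k` thus
corresponds to one increment of `⌊i * n / N⌋`, and a letter `a` to a non-increment followed by an
increment. Induction on `k` (`alpha_prefix`) matches the prefixes, and `M n = N` gives the whole
words.
-/

/-- The lower Christoffel word of slope `q / p`: the word of length `p + q`
whose `i`-th letter (for `1 ≤ i ≤ p + q`) is `a` (encoded `false`) if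
`⌊i·q/(p+q)⌋ = ⌊(i−1)·q/(p+q)⌋` and `b` (encoded `true`) otherwise. -/
def christoffel (p q : ℕ) : List Bool :=
  (List.range (p + q)).map (fun i => decide (((i + 1) * q) / (p + q) ≠ (i * q) / (p + q)))

/-- A word is a Christoffel word if it is the lower Christoffel word of slope
`q / p` for some coprime pair `(p, q) ≠ (0, 0)`. -/
def IsChristoffel (w : List Bool) : Prop :=
  ∃ p q : ℕ, Nat.Coprime p q ∧ (p, q) ≠ (0, 0) ∧ w = christoffel p q

theorem alpha_append (u v : List Bool) : alpha (u ++ v) = alpha u ++ alpha v := by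
  induction u with
  | nil => rfl
  | cons c u ih => simp [alpha, ih]

/-- The image under `alpha` of the prefix of length `k` of `christoffel p q` is the prefix of length
`2k - ⌊kq/(p+q)⌋` of `christoffel p (p + q)`. The formulas for the letters make sense beyond the
lengths of the two words, so `k` need not be bounded. -/
theorem alpha_prefix (p q : ℕ) (hn : 0 < p + q) (k : ℕ) :
    alpha ((List.range k).map
        (fun i => decide (((i + 1) * q) / (p + q) ≠ (i * q) / (p + q)))) =
      (List.range (2 * k - k * q / (p + q))).map
        (fun i => decide (((i + 1) * (p + q)) / (p + (p + q)) ≠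
          (i * (p + q)) / (p + (p + q)))) := by
  induction k with
  | zero => simp [alpha]
  | succ k ih =>
    rw [List.range_succ, List.map_append, alpha_append, ih]
    -- `s` and `r` are the quotient and the remainder of `k * q` by `p + q`; `M` is the length of
    -- the image of the prefix of length `k`.
    obtain ⟨s, hs⟩ : ∃ s, s = k * q / (p + q) := ⟨_, rfl⟩
    obtain ⟨r, hr⟩ : ∃ r, r = k * q % (p + q) := ⟨_, rfl⟩
    have hrlt : r < p + q := hr ▸ Nat.mod_lt _ hn
    have hdiv : (p + q) * s + r = k * q := by rw [hs, hr]; exact Nat.div_add_mod _ _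
    have hsk : s ≤ k := by
      by_contra h
      nlinarith [Nat.mul_le_mul_left (p + q) (show k + 1 ≤ s by omega)]
    obtain ⟨M, hM⟩ : ∃ M, M + s = 2 * k := ⟨2 * k - s, by omega⟩
    have hMr : M * (p + q) = k * (p + (p + q)) + r := by
      have h : (M + s) * (p + q) = 2 * k * (p + q) := by rw [hM]
      nlinarith
    have h0 : M * (p + q) / (p + (p + q)) = k :=
      Nat.div_eq_of_lt_le (by nlinarith) (by nlinarith)
    rw [← hs, show 2 * k - s = M by omega]
    -- The letter at position `k` is `a` exactly when adding `q` to the remainder does not wrap.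
    by_cases hc : r + q < p + q
    · have h1 : (k + 1) * q / (p + q) = s :=
        Nat.div_eq_of_lt_le (by nlinarith) (by nlinarith)
      have h2 : (M + 1) * (p + q) / (p + (p + q)) = k :=
        Nat.div_eq_of_lt_le (by nlinarith) (by nlinarith)
      have h3 : (M + 1 + 1) * (p + q) / (p + (p + q)) = k + 1 :=
        Nat.div_eq_of_lt_le (by nlinarith) (by nlinarith)
      rw [h1, show 2 * (k + 1) - s = M + 1 + 1 by omega, List.range_succ, List.range_succ]
      simp [alpha, h0, h1, h2, h3, ← hs]
    · have h1 : (k + 1) * q / (p + q) = s + 1 :=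
        Nat.div_eq_of_lt_le (by nlinarith) (by nlinarith)
      have h2 : (M + 1) * (p + q) / (p + (p + q)) = k + 1 :=
        Nat.div_eq_of_lt_le (by nlinarith) (by nlinarith)
      rw [h1, show 2 * (k + 1) - (s + 1) = M + 1 by omega, List.range_succ]
      simp [alpha, h0, h1, h2, ← hs]

/-- If `w` is a Christoffel word, then so is `α(w)`, the word obtained from `w`
by replacing every occurrence of the letter `a` with the word `ab`. -/
theorem isChristoffel_alpha :
    ∀ w : List Bool, IsChristoffel w → IsChristoffel (alpha w) := by
  rintro w ⟨p, q, hpq, hne, rfl⟩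
  have hn : 0 < p + q := by
    by_contra h
    exact hne (by rw [show p = 0 by omega, show q = 0 by omega])
  refine ⟨p, p + q, by simpa using hpq, fun h => ?_, ?_⟩
  · have h2 := congrArg Prod.snd h
    simp only at h2
    omega
  · have h := alpha_prefix p q hn (p + q)
    rw [Nat.mul_div_cancel_left q hn, show 2 * (p + q) - q = p + (p + q) by omega] at h
    exact h
end

section
/- If w is a Christoffel word, then the word β(w) obtained from w by replacing every occurrence of the letter b with the two-letter word ab is again a Christoffel word. -/
theorem beta_append (u v : List Bool) : beta (u ++ v) = beta u ++ beta v := by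
  induction u with
  | nil => rfl
  | cons c u ih => simp [beta, ih]

theorem beta_prefix (n q : ℕ) (hn : 0 < n) (hq : q ≤ n) (k : ℕ) :
    beta ((List.range k).map (fun i => decide (((i + 1) * q) / n ≠ (i * q) / n))) =
      (List.range (k + k * q / n)).map
        (fun i => decide (((i + 1) * q) / (n + q) ≠ (i * q) / (n + q))) := by
  induction k with
  | zero => simp [beta]
  | succ k ih =>
    rw [List.range_succ, List.map_append, beta_append, ih]
    obtain ⟨f, hf⟩ : ∃ f, f = k * q / n := ⟨_, rfl⟩
    obtain ⟨r, hr⟩ : ∃ r, r = k * q % n := ⟨_, rfl⟩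
    have hrn : r < n := hr ▸ Nat.mod_lt _ hn
    have hkq : k * q = n * f + r := by rw [hf, hr, Nat.div_add_mod]
    have h0 : (k + f) * q / (n + q) = f := by
      apply Nat.div_eq_of_lt_le <;> nlinarith
    have h1 : (k + f + 1) * q / (n + q) = f := by
      apply Nat.div_eq_of_lt_le <;> nlinarith
    rw [← hf]
    by_cases hc : r + q < n
    · have h : (k + 1) * q / n = f := by
        apply Nat.div_eq_of_lt_le <;> nlinarith
      rw [h, show k + 1 + f = k + f + 1 by omega, List.range_succ, List.map_append]
      simp [beta, h, ← hf, h0, h1]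
    · have h : (k + 1) * q / n = f + 1 := by
        apply Nat.div_eq_of_lt_le <;> nlinarith
      have h2 : (k + f + 1 + 1) * q / (n + q) = f + 1 := by
        apply Nat.div_eq_of_lt_le <;> nlinarith
      rw [h, show k + 1 + (f + 1) = k + f + 1 + 1 by omega, List.range_succ, List.range_succ]
      simp [beta, h, ← hf, h0, h1, h2]

/-- If `w` is a Christoffel word, then so is `β(w)`, the word obtained from `w`
by replacing every occurrence of the letter `b` with the word `ab`. -/
theorem isChristoffel_beta :
    ∀ w : List Bool, IsChristoffel w → IsChristoffel (beta w) := by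
  rintro w ⟨p, q, hpq, hne, rfl⟩
  have hn : 0 < p + q := by
    by_contra h
    exact hne (by ext <;> simp <;> omega)
  refine ⟨p + q, q, by simpa using hpq, by simp only [ne_eq, Prod.mk.injEq]; omega, ?_⟩
  have h := beta_prefix (p + q) q hn (by omega) (p + q)
  rwa [Nat.mul_div_cancel_left q hn] at h
end

section
/- Duality between the Christoffel tree and the Cohn tree: for every finite binary sequence s, writing ch(s) = (u, v) and co(s) = (u', v'), one has |u| = |u'·v'|_b and |v| = |u'·v'|_a, and dually |u'| = |u·v|_b and |v'| = |u·v|_a. -/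
/-!
Abelianise both trees. Along every branch the four letter counts of `ch s = (u, v)` and
`co s = (u', v')` stay related by
`|u'|_a = |v|_b`, `|u'|_b = |u|_b`, `|v'|_a = |v|_a`, `|v'|_b = |u|_a`,
that is, the two count matrices are reflections of each other in the antidiagonal: appending `u` to `v`
is a row operation on one, and substituting `b ↦ ab` is the matching column operation on the
other (likewise for appending `v` to `u` and `a ↦ ab`). Duality follows because a
length is the sum of the two letter counts.
-/

def chStep : (List Bool × List Bool) → Bool → (List Bool × List Bool)
  | (u, v), false => (u, u ++ v)
  | (u, v), true => (u ++ v, v)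

/-- The Christoffel tree: words are lists over `Bool` with `false` encoding the
letter `a` and `true` encoding the letter `b`. `ch [] = (a, b)`, and if
`ch s = (u,v)` then `ch (s ++ [false]) = (u, u ++ v)` and
`ch (s ++ [true]) = (u ++ v, v)`. -/
def ch (s : List Bool) : List Bool × List Bool := s.foldl chStep ([false], [true])

lemma count_alpha (w : List Bool) :
    (alpha w).count false = w.count false ∧
      (alpha w).count true = w.count false + w.count true := by
  induction w with
  | nil => simp [alpha]
  | cons c w ih => cases c <;> simp [alpha, ih, -List.count_false_add_count_true, -List.count_true_add_count_false] <;>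
      omega

lemma count_beta (w : List Bool) :
    (beta w).count false = w.count false + w.count true ∧
      (beta w).count true = w.count true := by
  induction w with
  | nil => simp [beta]
  | cons c w ih => cases c <;> simp [beta, ih, -List.count_false_add_count_true, -List.count_true_add_count_false] <;>
      omega

/-- The 2 × 2 matrices of letter counts of the pairs `p` and `q` (rows: words, columns: letters `a`,
`b`) are reflections of each other in the antidiagonal. -/
def CountDual (p q : List Bool × List Bool) : Prop :=
  q.1.count false = p.2.count true ∧ q.1.count true = p.1.count true ∧
    q.2.count false = p.2.count false ∧ q.2.count true = p.1.count false

lemma CountDual.step {p q : List Bool × List Bool} (h : CountDual p q) (c : Bool) :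
    CountDual (chStep p c) (coStep q c) := by
  obtain ⟨u, v⟩ := p
  obtain ⟨u', v'⟩ := q
  cases c <;>
    simp only [CountDual, chStep, coStep, List.count_append, count_alpha, count_beta] at h ⊢ <;>
    omega

lemma countDual_ch_co (s : List Bool) : CountDual (ch s) (co s) := by
  induction s using List.reverseRecOn with
  | nil => simp [CountDual, ch, co]
  | append_singleton s c ih => simpa [ch, co] using ih.step c

/-- Duality between the Christoffel tree and the Cohn tree: if `ch s = (u, v)`
and `co s = (u', v')`, then `|u| = |u'·v'|_b`, `|v| = |u'·v'|_a`, and dually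
`|u'| = |u·v|_b`, `|v'| = |u·v|_a` (`a` is encoded `false`, `b` is encoded
`true`). -/
theorem christoffelTree_cohnTree_duality :
    ∀ s : List Bool, ∀ u v u' v' : List Bool,
      ch s = (u, v) → co s = (u', v') →
      u.length = (u' ++ v').count true ∧ v.length = (u' ++ v').count false ∧
      u'.length = (u ++ v).count true ∧ v'.length = (u ++ v).count false := by
  intro s u v u' v' hu hv
  have h := countDual_ch_co s
  rw [hu, hv] at h
  simp only [CountDual] at h
  have hlen : ∀ w : List Bool, w.length = w.count true + w.count false := fun w =>
    (List.count_true_add_count_false w).symm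
  simp only [List.count_append, hlen]
  omega
end
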